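/- arXiv:2210.03447 — 3 statements merged into one kernel-verified Lean document; each statement's English description precedes it below -/
import Mathlib

section
/- The function W satisfies the degenerate linear equation r·∂W/∂r(r,θ) + ∂²W/∂θ²(r,θ) = 0 for all (r,θ) in the open rectangle D₁ = (0,1) × (0,π/2). -/
/-!
Each term `r ^ (m²) * sin (m θ) / ((m² - 1) m)` of the series satisfies the equation, since `r ∂_r`
multiplies it by `m²` and `∂_θ²` multiplies it by `-m²`. It remains to differentiate term by term.
Since `m² ≤ (m² - 1) m` for `m ≥ 2`, the terms and their derivatives (one in `r`, two in `θ`) are all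
of the form `s ^ k * (a * x) / c` with `|a| ≤ c`, `|x| ≤ 1` and `k ≥ n`; for `0 ≤ s ≤ q < 1` the
geometric series `∑ q ^ n` therefore dominates them uniformly (`norm_term_le`).
-/

open Real Set Topology Filter

/-- `mIdx n = 4(n+1) - 2 = 4n + 2`, the odd-indexed frequencies `2, 6, 10, …`. -/
def mIdx (n : ℕ) : ℕ := 4 * n + 2

/-- `W(r,θ) = (8/π) ∑_{n≥1} r^{mₙ²} sin(mₙ θ) / ((mₙ² − 1) mₙ)` with `mₙ = 4n − 2`. -/
noncomputable def W (r θ : ℝ) : ℝ :=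
  (8 / π) * ∑' n : ℕ,
    r ^ (mIdx n ^ 2) * Real.sin ((mIdx n : ℝ) * θ) / (((mIdx n : ℝ) ^ 2 - 1) * (mIdx n : ℝ))

/-- The geometric bound dominating every differentiated series. -/
lemma norm_term_le {n k : ℕ} (hk : n ≤ k) {s q a x c : ℝ} (hs : 0 ≤ s) (hsq : s ≤ q) (hq : q ≤ 1)
    (hc : 0 < c) (ha : |a| ≤ c) (hx : |x| ≤ 1) : ‖s ^ k * (a * x) / c‖ ≤ q ^ n := by
  have h1 : s ^ k ≤ q ^ n :=
    (pow_le_pow_of_le_one hs (hsq.trans hq) hk).trans (pow_le_pow_left₀ hs hsq n)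
  have h2 : |a| * |x| ≤ c := by
    nlinarith [abs_nonneg a, abs_nonneg x]
  rw [Real.norm_eq_abs, abs_div, abs_mul, abs_mul, abs_of_pos hc, abs_of_nonneg (pow_nonneg hs k),
    div_le_iff₀ hc]
  exact mul_le_mul h1 h2 (by positivity) (pow_nonneg (hs.trans hsq) n)

lemma two_le_mIdx (n : ℕ) : (2 : ℝ) ≤ mIdx n := by
  unfold mIdx; push_cast; linarith [Nat.cast_nonneg (α := ℝ) n]

lemma le_mIdx_sq_sub_one (n : ℕ) : n ≤ mIdx n ^ 2 - 1 := by
  have : n + 1 ≤ mIdx n ^ 2 := by unfold mIdx; nlinarith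
  omega

/-- The denominator `(m² - 1) m`. -/
noncomputable def denom (n : ℕ) : ℝ := ((mIdx n : ℝ) ^ 2 - 1) * (mIdx n : ℝ)

lemma sq_le_denom (n : ℕ) : (mIdx n : ℝ) ^ 2 ≤ denom n := by
  unfold denom; nlinarith [two_le_mIdx n]

lemma le_denom (n : ℕ) : (mIdx n : ℝ) ≤ denom n := by
  nlinarith [two_le_mIdx n, sq_le_denom n]

lemma denom_pos (n : ℕ) : 0 < denom n := by
  linarith [two_le_mIdx n, le_denom n]

lemma summable_W {r : ℝ} (h0 : 0 ≤ r) (h1 : r < 1) (θ : ℝ) :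
    Summable fun n => r ^ (mIdx n ^ 2) * Real.sin (mIdx n * θ) / denom n := by
  refine .of_norm_bounded (summable_geometric_of_lt_one h0 h1) fun n => ?_
  have := norm_term_le (k := mIdx n ^ 2) ((le_mIdx_sq_sub_one n).trans (Nat.sub_le _ _)) h0 le_rfl
    h1.le (denom_pos n) (a := 1)
    (by rw [abs_one]; linarith [two_le_mIdx n, le_denom n]) (abs_sin_le_one (mIdx n * θ))
  simpa using this

lemma hasDerivAt_W_left {r : ℝ} (h0 : 0 < r) (h1 : r < 1) (θ : ℝ) :
    HasDerivAt (fun s => W s θ)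
      ((8 / π) * ∑' n, r ^ (mIdx n ^ 2 - 1) * ((mIdx n : ℝ) ^ 2 * Real.sin (mIdx n * θ)) / denom n)
      r := by
  refine HasDerivAt.const_mul _ ?_
  -- The bound is uniform on `(0, q)`, for any `q` strictly between `r` and `1`.
  obtain ⟨q, hrq, hq1⟩ := exists_between h1
  refine hasDerivAt_tsum_of_isPreconnected
    (g' := fun n s => s ^ (mIdx n ^ 2 - 1) * ((mIdx n : ℝ) ^ 2 * Real.sin (mIdx n * θ)) / denom n)
    (summable_geometric_of_lt_one (h0.trans hrq).le hq1) isOpen_Ioo isPreconnected_Ioo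
    (fun n s _ => ?_) (fun n s hs => ?_) (⟨h0, hrq⟩ : r ∈ Ioo 0 q) (summable_W h0.le h1 θ) ⟨h0, hrq⟩
  · have := ((hasDerivAt_pow (mIdx n ^ 2) s).mul_const (Real.sin (mIdx n * θ))).div_const (denom n)
    convert! this using 1
    push_cast; ring
  · exact norm_term_le (le_mIdx_sq_sub_one n) hs.1.le hs.2.le hq1.le (denom_pos n)
      (by rw [abs_of_nonneg (sq_nonneg _)]; exact sq_le_denom n) (abs_sin_le_one _)

lemma hasDerivAt_W_right {r : ℝ} (h0 : 0 ≤ r) (h1 : r < 1) (θ : ℝ) :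
    HasDerivAt (fun t => W r t)
      ((8 / π) * ∑' n, r ^ (mIdx n ^ 2) * (mIdx n * Real.cos (mIdx n * θ)) / denom n) θ := by
  refine HasDerivAt.const_mul _ ?_
  refine hasDerivAt_tsum
    (g' := fun n t => r ^ (mIdx n ^ 2) * (mIdx n * Real.cos (mIdx n * t)) / denom n)
    (summable_geometric_of_lt_one h0 h1) (fun n t => ?_) (fun n t => ?_) (summable_W h0 h1 θ) θ
  · have := ((((hasDerivAt_id t).const_mul (mIdx n : ℝ)).sin).const_mul
      (r ^ (mIdx n ^ 2))).div_const (denom n)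
    convert! this using 1
    simp only [id]; ring
  · exact norm_term_le ((le_mIdx_sq_sub_one n).trans (Nat.sub_le _ _)) h0 le_rfl h1.le (denom_pos n)
      (by rw [Nat.abs_cast]; exact le_denom n) (abs_cos_le_one _)

lemma hasDerivAt_W_right_right {r : ℝ} (h0 : 0 ≤ r) (h1 : r < 1) (θ : ℝ) :
    HasDerivAt (fun t => (8 / π) * ∑' n,
        r ^ (mIdx n ^ 2) * (mIdx n * Real.cos (mIdx n * t)) / denom n)
      ((8 / π) * ∑' n, r ^ (mIdx n ^ 2) * (-(mIdx n : ℝ) ^ 2 * Real.sin (mIdx n * θ)) / denom n)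
      θ := by
  refine HasDerivAt.const_mul _ ?_
  refine hasDerivAt_tsum (y₀ := θ)
    (g' := fun n t => r ^ (mIdx n ^ 2) * (-(mIdx n : ℝ) ^ 2 * Real.sin (mIdx n * t)) / denom n)
    (summable_geometric_of_lt_one h0 h1) (fun n t => ?_) (fun n t => ?_)
    (.of_norm_bounded (summable_geometric_of_lt_one h0 h1) fun n => ?_) θ
  · have := (((((hasDerivAt_id t).const_mul (mIdx n : ℝ)).cos).const_mul (mIdx n : ℝ)).const_mul
      (r ^ (mIdx n ^ 2))).div_const (denom n)
    convert! this using 1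
    simp only [id]; ring
  · exact norm_term_le ((le_mIdx_sq_sub_one n).trans (Nat.sub_le _ _)) h0 le_rfl h1.le (denom_pos n)
      (by rw [abs_neg, abs_of_nonneg (sq_nonneg _)]; exact sq_le_denom n) (abs_sin_le_one _)
  · exact norm_term_le ((le_mIdx_sq_sub_one n).trans (Nat.sub_le _ _)) h0 le_rfl h1.le (denom_pos n)
      (by rw [Nat.abs_cast]; exact le_denom n) (abs_cos_le_one (mIdx n * θ))

/-- `r·W_r + W_{θθ} = 0` on `D₁ = (0,1) × (0,π/2)`. -/
theorem stmt0 (r θ : ℝ) (hr : r ∈ Ioo (0 : ℝ) 1) (hθ : θ ∈ Ioo (0 : ℝ) (π / 2)) :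
    r * deriv (fun s => W s θ) r + iteratedDeriv 2 (fun t => W r t) θ = 0 := by
  obtain ⟨h0, h1⟩ := hr
  rw [iteratedDeriv_succ, iteratedDeriv_one, funext fun t => (hasDerivAt_W_right h0.le h1 t).deriv,
    (hasDerivAt_W_right_right h0.le h1 θ).deriv, (hasDerivAt_W_left h0 h1 θ).deriv,
    mul_left_comm, ← tsum_mul_left, ← mul_add, add_eq_zero_iff_eq_neg.2, mul_zero]
  rw [← tsum_neg]
  refine tsum_congr fun n => ?_
  have hm : mIdx n ^ 2 ≠ 0 := by unfold mIdx; positivity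
  rw [← mul_pow_sub_one hm r]
  ring
end

section
/- For every θ ∈ [0,π/2] one has W(1,θ) = cos θ + sin θ − 1; that is, (8/π) · ∑_{n=1}^∞ sin((4n−2)θ) / (((4n−2)² − 1)·(4n−2)) = cos θ + sin θ − 1. Moreover W(r,0) = W(r,π/2) = 0 for all r ∈ [0,1] and W(0,θ) = 0 for all θ ∈ [0,π/2]. -/
/-!
The function `cos θ + sin θ − 1` vanishes at `0` and `π/2`, so its odd `π`-periodic extension
`oddExt` is continuous, and it is antiperiodic with antiperiod `π/2`. Antiperiodicity makes the
Fourier coefficients of even index `n` vanish; for odd `n`, with `m = 2n`, an explicit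
antiderivative over the half period (`integral_half`) gives the coefficient
`-4i / (π (m² − 1) m)` (`fourierCoeffOn_oddExt`). These are absolutely summable, so the Fourier
series of the continuous function `oddExt` converges to it pointwise; pairing the indices `n` and
`-n` turns it into the sine series (`hasSum_sin`). The remaining boundary values hold termwise:
`sin (mₙ θ) = 0` at `θ = 0, π/2`, and `0 ^ (mₙ²) = 0`.
-/

open Real Set Topology Filter

/-- The `π`-periodic odd extension of `cos θ + sin θ − 1` from `[0, π/2]`, written on the fundamental
domain `[0, π]`. It is antiperiodic with antiperiod `π/2`. -/
noncomputable def oddExt (x : ℝ) : ℂ :=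
  if x ≤ π / 2 then ((Real.cos x + Real.sin x - 1 : ℝ) : ℂ)
  else ((Real.cos x - Real.sin x + 1 : ℝ) : ℂ)

lemma continuous_oddExt : Continuous oddExt := by
  unfold oddExt
  refine Continuous.if_le (by fun_prop) (by fun_prop) (by fun_prop) (by fun_prop) ?_
  rintro x rfl
  simp

lemma oddExt_add_half {x : ℝ} (hx : 0 ≤ x) (hx' : x ≤ π / 2) :
    oddExt (x + π / 2) = -oddExt x := by
  rcases hx.eq_or_lt with rfl | h
  · simp [oddExt, div_nonneg pi_pos.le]
  · rw [oddExt, oddExt, if_neg (by linarith), if_pos hx', Real.cos_add_pi_div_two,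
      Real.sin_add_pi_div_two]
    push_cast
    ring

/-- The Fourier integral of `cos x + sin x − 1` over the half period, at an odd index `n`. -/
lemma integral_half {n : ℤ} (hn : Odd n) :
    ∫ x in (0 : ℝ)..π / 2, Complex.exp (-(2 * n * x * Complex.I)) *
        ((Real.cos x + Real.sin x - 1 : ℝ) : ℂ) =
      -2 * Complex.I / ((((2 * n : ℂ)) ^ 2 - 1) * (2 * n)) := by
  have hn0 : (n : ℂ) ≠ 0 := by
    have : n ≠ 0 := by rintro rfl; simp at hn
    exact_mod_cast this
  have hn1 : (2 * (n : ℂ)) ^ 2 - 1 ≠ 0 := by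
    have h : (2 * n) ^ 2 - 1 ≠ 0 := by
      intro h
      have : 2 * (2 * n ^ 2) = 1 := by linarith
      omega
    exact_mod_cast h
  set m : ℂ := 2 * n with hm
  have hm0 : m ≠ 0 := by simp [hm, hn0]
  -- An antiderivative of the form `exp (-imx) (a cos x + b sin x + c)`.
  have key : ∀ x ∈ uIcc (0 : ℝ) (π / 2), HasDerivAt
      (fun x : ℝ => Complex.exp (-(m * x * Complex.I)) *
        ((1 + Complex.I * m) / (m ^ 2 - 1) * Complex.cos x
          + (Complex.I * m - 1) / (m ^ 2 - 1) * Complex.sin x - Complex.I / m))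
      (Complex.exp (-(m * x * Complex.I)) * ((Real.cos x + Real.sin x - 1 : ℝ) : ℂ)) x := by
    intro x _
    have h0 : HasDerivAt (fun z : ℂ => -(m * z * Complex.I)) (-(m * Complex.I)) (x : ℂ) := by
      have h := (((hasDerivAt_id (x : ℂ)).const_mul m).mul_const Complex.I).neg
      rw [mul_one] at h
      exact h
    have h1 := h0.cexp.mul
      ((((Complex.hasDerivAt_cos (x : ℂ)).const_mul ((1 + Complex.I * m) / (m ^ 2 - 1))).add
        ((Complex.hasDerivAt_sin (x : ℂ)).const_mul
          ((Complex.I * m - 1) / (m ^ 2 - 1)))).sub_const (Complex.I / m))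
    refine h1.comp_ofReal.congr_deriv ?_
    simp only [Pi.add_apply]
    push_cast
    field_simp
    ring_nf
    simp only [Complex.I_sq]
    ring
  rw [intervalIntegral.integral_eq_sub_of_hasDerivAt key
    (Continuous.intervalIntegrable (by fun_prop) _ _)]
  have he : Complex.exp (-(m * ((π / 2 : ℝ) : ℂ) * Complex.I)) = -1 := by
    obtain ⟨k, rfl⟩ := hn
    rw [hm, Complex.exp_eq_exp_iff_exists_int.mpr ⟨-k - 1, ?_⟩, Complex.exp_pi_mul_I]
    push_cast
    ring
  rw [he]
  simp only [← Complex.ofReal_cos, ← Complex.ofReal_sin, Real.cos_pi_div_two,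
    Real.sin_pi_div_two, Real.cos_zero, Real.sin_zero]
  simp
  field_simp
  ring

/-- The Fourier coefficients of `oddExt`: antiperiodicity kills the even ones. -/
lemma fourierCoeffOn_oddExt (n : ℤ) :
    fourierCoeffOn pi_pos oddExt n =
      if Odd n then -4 * Complex.I / (π * ((((2 * n : ℂ)) ^ 2 - 1) * (2 * n))) else 0 := by
  have hfour : ∀ x : ℝ, fourier (-n) (x : AddCircle (π - 0)) =
      Complex.exp (-(2 * n * x * Complex.I)) := by
    intro x
    rw [fourier_coe_apply]
    congr 1
    have : (π : ℂ) ≠ 0 := by exact_mod_cast pi_ne_zero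
    push_cast
    field_simp
    ring
  have hc : Continuous fun x : ℝ => Complex.exp (-(2 * n * x * Complex.I)) * oddExt x :=
    Continuous.mul (by fun_prop) continuous_oddExt
  have hfirst : ∫ x in (0 : ℝ)..π / 2, Complex.exp (-(2 * n * x * Complex.I)) * oddExt x =
      ∫ x in (0 : ℝ)..π / 2, Complex.exp (-(2 * n * x * Complex.I)) *
        ((Real.cos x + Real.sin x - 1 : ℝ) : ℂ) := by
    refine intervalIntegral.integral_congr fun x hx => ?_
    rw [uIcc_of_le (by positivity)] at hx
    simp only [oddExt, if_pos hx.2]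
  have he : Complex.exp (-(n * π * Complex.I)) = if Odd n then -1 else 1 := by
    split_ifs with h
    · obtain ⟨k, rfl⟩ := h
      rw [Complex.exp_eq_exp_iff_exists_int.mpr ⟨-k - 1, ?_⟩, Complex.exp_pi_mul_I]
      push_cast
      ring
    · obtain ⟨k, rfl⟩ := Int.not_odd_iff_even.mp h
      rw [Complex.exp_eq_one_iff]
      exact ⟨-k, by push_cast; ring⟩
  have hsecond : ∫ x in (π / 2)..π, Complex.exp (-(2 * n * x * Complex.I)) * oddExt x =
      -(if Odd n then -1 else 1) *
        ∫ x in (0 : ℝ)..π / 2, Complex.exp (-(2 * n * x * Complex.I)) * oddExt x := by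
    rw [← he, ← intervalIntegral.integral_const_mul]
    have hshift := intervalIntegral.integral_comp_add_right (a := 0) (b := π / 2)
      (fun x : ℝ => Complex.exp (-(2 * n * x * Complex.I)) * oddExt x) (π / 2)
    rw [zero_add, add_halves] at hshift
    rw [← hshift]
    refine intervalIntegral.integral_congr fun x hx => ?_
    rw [uIcc_of_le (by positivity)] at hx
    rw [oddExt_add_half hx.1 hx.2,
      show (-(2 * n * ((x + π / 2 : ℝ) : ℂ) * Complex.I)) =
        -(n * π * Complex.I) + -(2 * n * x * Complex.I) by push_cast; ring, Complex.exp_add]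
    ring
  rw [fourierCoeffOn_eq_integral]
  simp only [hfour, smul_eq_mul]
  rw [← intervalIntegral.integral_add_adjacent_intervals
    (hc.intervalIntegrable 0 (π / 2)) (hc.intervalIntegrable (π / 2) π), hsecond, hfirst]
  split_ifs with h
  · rw [integral_half h, sub_zero, Complex.real_smul]
    push_cast
    rw [neg_neg, one_mul, ← two_mul, ← div_div (-4 * Complex.I)]
    ring
  · simp

lemma summable_coeff : Summable fun n : ℤ =>
    if Odd n then -4 * Complex.I / (π * ((((2 * n : ℂ)) ^ 2 - 1) * (2 * n))) else 0 := by
  refine Summable.of_norm_bounded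
    (g := fun n : ℤ => (4 / π) * (1 / (n : ℝ) ^ 2)) ((Real.summable_one_div_int_pow.mpr
      one_lt_two).mul_left _) fun n => ?_
  split_ifs with h
  · have hn1 : (1 : ℝ) ≤ |(n : ℝ)| := by
      have : n ≠ 0 := by rintro rfl; simp at h
      exact_mod_cast Int.one_le_abs this
    have hsq : (n : ℝ) ^ 2 = |(n : ℝ)| ^ 2 := (sq_abs _).symm
    have h1 : ‖((((2 * n : ℂ)) ^ 2 - 1) * (2 * n))‖ = |(2 * (n : ℝ)) ^ 2 - 1| * (2 * |(n : ℝ)|) := by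
      have : ((((2 * n : ℂ)) ^ 2 - 1) * (2 * n)) =
          ((((2 * (n : ℝ)) ^ 2 - 1) * (2 * (n : ℝ)) : ℝ) : ℂ) := by push_cast; rfl
      rw [this, Complex.norm_real, Real.norm_eq_abs, abs_mul, abs_mul 2, abs_two]
    rw [norm_div, norm_mul, norm_mul, h1]
    simp only [norm_neg, Complex.norm_I, Complex.norm_real, Real.norm_eq_abs, abs_of_pos pi_pos]
    rw [abs_of_nonneg (by nlinarith), div_mul_div_comm]
    have hp := pi_pos
    rw [Complex.norm_ofNat, mul_one]
    have hn2 : 0 < (n : ℝ) ^ 2 := by nlinarith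
    gcongr
    rw [mul_pow, hsq]
    nlinarith
  · rw [norm_zero]; positivity

/-- The Fourier expansion of `cos θ + sin θ − 1` on `[0, π/2]`. -/
lemma hasSum_sin {θ : ℝ} (hθ : θ ∈ Icc (0 : ℝ) (π / 2)) :
    HasSum (fun n : ℕ => (8 / π) * (Real.sin ((mIdx n : ℝ) * θ) /
      (((mIdx n : ℝ) ^ 2 - 1) * (mIdx n : ℝ)))) (Real.cos θ + Real.sin θ - 1) := by
  have hpi := pi_pos
  have : Fact (0 < π) := ⟨hpi⟩
  have hend : oddExt 0 = oddExt (0 + π) := by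
    rw [oddExt, oddExt, if_pos (by positivity), if_neg (by linarith)]
    simp
  let F : C(AddCircle π, ℂ) := ⟨AddCircle.liftIco π 0 oddExt,
    AddCircle.liftIco_continuous hend continuous_oddExt.continuousOn⟩
  have hcoef : ∀ n : ℤ, fourierCoeff F n =
      if Odd n then -4 * Complex.I / (π * ((((2 * n : ℂ)) ^ 2 - 1) * (2 * n))) else 0 := by
    intro n
    rw [← fourierCoeffOn_oddExt]
    change fourierCoeff (AddCircle.liftIco π 0 oddExt) n = _
    rw [fourierCoeff_liftIco_eq]
    simp only [zero_add]
  have hs := has_pointwise_sum_fourier_series_of_summable (f := F)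
    (by rw [funext hcoef]; exact summable_coeff) (θ : AddCircle π)
  have hF : F (θ : AddCircle π) = ((Real.cos θ + Real.sin θ - 1 : ℝ) : ℂ) := by
    change AddCircle.liftIco π 0 oddExt (θ : AddCircle π) = _
    rw [AddCircle.liftIco_coe_apply (by constructor <;> linarith [hθ.1, hθ.2]), oddExt, if_pos hθ.2]
  rw [hF] at hs
  -- Pair the indices `n` and `-n`, then keep the odd `n = 2k + 1`, for which `2n = mIdx k`.
  have hs2 := hs.nat_add_neg
  have hinj : Function.Injective fun k : ℕ => 2 * k + 1 := fun a b h => by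
    simp only at h; omega
  rw [← hinj.hasSum_iff] at hs2
  · have h0 : fourierCoeff F 0 = 0 := by rw [hcoef]; simp
    rw [h0, zero_smul, add_zero] at hs2
    refine Complex.hasSum_ofReal.mp ?_
    convert hs2 using 1
    ext k
    have hodd : Odd (((2 * k + 1 : ℕ)) : ℤ) := ⟨k, by push_cast; ring⟩
    simp only [Function.comp_apply]
    rw [hcoef, hcoef, if_pos hodd, if_pos hodd.neg, fourier_coe_apply, fourier_coe_apply]
    have hpc : (π : ℂ) ≠ 0 := by exact_mod_cast pi_ne_zero
    have e1 : 2 * (π : ℂ) * Complex.I * (((2 * k + 1 : ℕ) : ℤ) : ℂ) * (θ : ℂ) / (π : ℂ) =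
        ((mIdx k : ℂ) * θ) * Complex.I := by
      simp only [mIdx]; push_cast; field_simp; ring
    have e2 : 2 * (π : ℂ) * Complex.I * ((-((2 * k + 1 : ℕ) : ℤ) : ℤ) : ℂ) * (θ : ℂ) / (π : ℂ) =
        -((mIdx k : ℂ) * θ) * Complex.I := by
      simp only [mIdx]; push_cast; field_simp; ring
    have e3 : (2 * (((2 * k + 1 : ℕ) : ℤ) : ℂ)) = mIdx k := by
      simp only [mIdx]; push_cast; ring
    have e4 : (2 * ((-((2 * k + 1 : ℕ) : ℤ) : ℤ) : ℂ)) = -mIdx k := by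
      rw [← e3]; push_cast; ring
    rw [e1, e2, e3, e4]
    push_cast
    rw [Complex.sin]
    simp only [smul_eq_mul, neg_sq, div_eq_mul_inv, mul_inv, inv_neg]
    ring
  · intro n hn
    have hn' : ¬ Odd (n : ℤ) := fun h => hn <| by
      obtain ⟨k, hk⟩ := (Int.odd_coe_nat n).mp h
      exact ⟨k, hk.symm⟩
    rw [hcoef, hcoef, if_neg hn', if_neg (by rwa [odd_neg])]
    simp

/-- boundary values of `W`: `W(1,θ) = cos θ + sin θ − 1` on `[0,π/2]`,
`W(r,0) = W(r,π/2) = 0` on `[0,1]`, and `W(0,θ) = 0` on `[0,π/2]`. -/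
theorem stmt1 :
    (∀ θ ∈ Icc (0 : ℝ) (π / 2), W 1 θ = Real.cos θ + Real.sin θ - 1) ∧
    (∀ θ ∈ Icc (0 : ℝ) (π / 2),
      (8 / π) * ∑' n : ℕ,
          Real.sin ((mIdx n : ℝ) * θ) / (((mIdx n : ℝ) ^ 2 - 1) * (mIdx n : ℝ))
        = Real.cos θ + Real.sin θ - 1) ∧
    (∀ r ∈ Icc (0 : ℝ) 1, W r 0 = 0 ∧ W r (π / 2) = 0) ∧
    (∀ θ ∈ Icc (0 : ℝ) (π / 2), W 0 θ = 0) := by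
  have key : ∀ θ ∈ Icc (0 : ℝ) (π / 2), (8 / π) * ∑' n : ℕ,
      Real.sin ((mIdx n : ℝ) * θ) / (((mIdx n : ℝ) ^ 2 - 1) * (mIdx n : ℝ))
        = Real.cos θ + Real.sin θ - 1 := fun θ hθ => by
    rw [← tsum_mul_left]
    exact (hasSum_sin hθ).tsum_eq
  refine ⟨fun θ hθ => ?_, key, fun r _ => ⟨?_, ?_⟩, fun θ _ => ?_⟩
  · simpa [W] using key θ hθ
  · simp [W]
  · have h : ∀ n : ℕ, Real.sin ((mIdx n : ℝ) * (π / 2)) = 0 := fun n => by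
      rw [show (mIdx n : ℝ) * (π / 2) = ((2 * n + 1 : ℕ) : ℝ) * π by
        simp only [mIdx]; push_cast; ring]
      exact Real.sin_nat_mul_pi _
    simp [W, h]
  · simp [W, mIdx]
end

section
/- Let w(p,q) be defined by w(r cos θ, r sin θ) := W(r,θ) on the open sector B₁. Then at every point (p,q) = (r cos θ, r sin θ) ∈ B₁, the determinant of the Hessian matrix of w satisfies det ℋw = −r^{−2}·(W_{rθ}(r,θ) − r^{−1}W_θ(r,θ))² ≤ 0, and this determinant is zero precisely when θ = π/4. -/
/-!
Every term `r ^ (m ^ 2) * sin (m θ)` of `W` satisfies `W_θθ = -r W_r`. In polar coordinates the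
Hessian of `w` with respect to the orthonormal frame `(∂_r, r⁻¹ ∂_θ)` has the entries `W_rr`,
`r⁻¹ W_r + r⁻² W_θθ` and `r⁻¹ K`, where `K = W_rθ - r⁻¹ W_θ`. The second entry vanishes by the
equation, so the determinant is `-r⁻² K²` (`hessian_eq`).

It remains to find the zeros of `K`. Since `∂_r - r⁻¹` multiplies `r ^ (m ^ 2)` by `(m ^ 2 - 1) / r`,
the factor `m ^ 2 - 1` in the denominators cancels and, with `s = r ^ 16` and `φ = 2 θ`,
`K = (8 / π) r³ ∑ s ^ (k (k + 1)) cos ((2 k + 1) φ)` (`Wrt_sub`). This is a theta series. By the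
Jacobi triple product it is `cos φ` times a product of positive factors, so on `0 < φ < π` it
vanishes only at `φ = π / 2`, that is `θ = π / 4` (`theta_eq_zero_iff`).

The triple product enters in finite form (`tsum_jac_eq`), which follows by induction on the number
of factors from a recurrence for its coefficients (`jac_succ`). Dominated convergence then yields a
strictly positive lower bound for the theta series when `cos φ > 0` (`theta_pos`); the symmetry
`φ ↦ π - φ` covers the remaining angles. Differentiation under the sum is justified once for a family
of series closed under partial derivatives (`hasFDerivAt_ser`).
-/

open Real Set Topology Filter

/-- `w` in Cartesian coordinates: `w(r cos θ, r sin θ) = W(r,θ)`.  On the open sector `B₁`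
(where `p, q > 0`) this is `W(√(p²+q²), arctan(q/p))`. -/
noncomputable def w (p q : ℝ) : ℝ := W (Real.sqrt (p ^ 2 + q ^ 2)) (Real.arctan (q / p))

/-- First partial `w_p`. -/
noncomputable def wp (p q : ℝ) : ℝ := deriv (fun s => w s q) p
/-- First partial `w_q`. -/
noncomputable def wq (p q : ℝ) : ℝ := deriv (fun t => w p t) q
/-- Second partial `w_{pp}`. -/
noncomputable def wpp (p q : ℝ) : ℝ := deriv (fun s => wp s q) p
/-- Second partial `w_{qq}`. -/
noncomputable def wqq (p q : ℝ) : ℝ := deriv (fun t => wq p t) q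
/-- Mixed second partial `w_{pq}`. -/
noncomputable def wpq (p q : ℝ) : ℝ := deriv (fun t => wp p t) q

/-- The open sector `B₁` in the first quadrant. -/
def B1 : Set (ℝ × ℝ) := {p : ℝ × ℝ | 0 < p.1 ∧ 0 < p.2 ∧ p.1 ^ 2 + p.2 ^ 2 < 1}

/-- The open unit square `Ω₁ = (0,1)²`. -/
def Ω1 : Set (ℝ × ℝ) := (Ioo (0 : ℝ) 1) ×ˢ Ioo (0 : ℝ) 1

/-- The (transposed) gradient map `∇wᵀ : (p,q) ↦ (w_p, w_q)`. -/
noncomputable def gradw (p : ℝ × ℝ) : ℝ × ℝ := (wp p.1 p.2, wq p.1 p.2)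

/-! ### Finite Jacobi triple product -/

/-- The finite `q`-Pochhammer product `∏_{j=1}^{n} (1 - p^j)`. -/
noncomputable def qPoch (p : ℝ) (n : ℕ) : ℝ := ∏ j ∈ Finset.range n, (1 - p ^ (j + 1))

/-- The reciprocal `1 / (p; p)_n`, extended by `0` to negative `n`, so that the recurrence
`(1 - p^n) / (p; p)_n = 1 / (p; p)_{n-1}` holds for every integer `n`. -/
noncomputable def qInv (p : ℝ) (n : ℤ) : ℝ := if 0 ≤ n then (qPoch p n.toNat)⁻¹ else 0

/-- The coefficient `p^{k(k+1)/2} (p;p)_{2N+1} / ((p;p)_{N-k} (p;p)_{N+k+1})` of the finite triple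
product, for `p = s²`. The square root `s` avoids halving the exponent. -/
noncomputable def jac (s : ℝ) (N k : ℕ) : ℝ :=
  s ^ (k * (k + 1)) * qPoch (s ^ 2) (2 * N + 1) * qInv (s ^ 2) ((N : ℤ) - k)
    * qInv (s ^ 2) ((N : ℤ) + k + 1)

lemma qPoch_succ (p : ℝ) (n : ℕ) : qPoch p (n + 1) = qPoch p n * (1 - p ^ (n + 1)) := by
  simp [qPoch, Finset.prod_range_succ]

lemma qPoch_pos {p : ℝ} (h0 : 0 < p) (h1 : p < 1) (n : ℕ) : 0 < qPoch p n := by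
  refine Finset.prod_pos fun j _ => ?_
  have := pow_lt_one₀ h0.le h1 (show j + 1 ≠ 0 by omega)
  linarith

lemma qPoch_le_one {p : ℝ} (h0 : 0 < p) (h1 : p < 1) (n : ℕ) : qPoch p n ≤ 1 := by
  refine Finset.prod_le_one (fun j _ => ?_) (fun j _ => ?_)
  · have := pow_lt_one₀ h0.le h1 (show j + 1 ≠ 0 by omega)
    linarith
  · have := pow_pos h0 (j + 1)
    linarith

lemma qPoch_antitone {p : ℝ} (h0 : 0 < p) (h1 : p < 1) : Antitone (qPoch p) := by
  refine antitone_nat_of_succ_le fun n => ?_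
  rw [qPoch_succ]
  have := qPoch_pos h0 h1 n
  have := pow_pos h0 (n + 1)
  nlinarith

/-- A uniform positive lower bound for `(p; p)_n`, from `1 - x ≥ exp (-x / (1 - x))`. -/
lemma exists_le_qPoch {p : ℝ} (h0 : 0 < p) (h1 : p < 1) : ∃ L, 0 < L ∧ ∀ n, L ≤ qPoch p n := by
  have key : ∀ n, Real.exp (-∑ j ∈ Finset.range n, p ^ j * (1 - p)⁻¹) ≤ qPoch p n := by
    intro n
    rw [← Finset.sum_neg_distrib, Real.exp_sum]
    refine Finset.prod_le_prod (fun j _ => (Real.exp_pos _).le) fun j _ => ?_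
    have hj := pow_pos h0 j
    have hj1 : p ^ j ≤ 1 := pow_le_one₀ h0.le h1.le
    have hp : 0 < 1 - p := by linarith
    have hpos : 0 < 1 - p ^ (j + 1) := by
      have := pow_lt_one₀ h0.le h1 (show j + 1 ≠ 0 by omega)
      linarith
    rw [Real.exp_neg, inv_le_comm₀ (Real.exp_pos _) hpos]
    refine le_trans ?_ (Real.add_one_le_exp _)
    have hle : (1 - p) ≤ 1 - p ^ (j + 1) := by
      rw [pow_succ]; nlinarith
    have e : (1 - p ^ (j + 1))⁻¹ = p ^ (j + 1) * (1 - p ^ (j + 1))⁻¹ + 1 := by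
      field_simp; ring
    rw [e]
    have hpj : p ^ (j + 1) ≤ p ^ j := pow_le_pow_of_le_one h0.le h1.le (Nat.le_succ j)
    exact add_le_add (mul_le_mul hpj (inv_anti₀ hp hle) (inv_pos.2 hpos).le hj.le) le_rfl
  refine ⟨Real.exp (-((1 - p)⁻¹ * (1 - p)⁻¹)), Real.exp_pos _, fun n => le_trans ?_ (key n)⟩
  rw [Real.exp_le_exp, neg_le_neg_iff, ← Finset.sum_mul]
  have hp : 0 < 1 - p := by linarith
  gcongr
  rw [← tsum_geometric_of_lt_one h0.le h1]
  exact (summable_geometric_of_lt_one h0.le h1).sum_le_tsum _ fun i _ => (pow_pos h0 i).le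

lemma qInv_rec {p : ℝ} (h0 : 0 < p) (h1 : p < 1) (n : ℤ) :
    qInv p (n - 1) = (1 - p ^ n) * qInv p n := by
  rcases lt_trichotomy n 0 with h | h | h
  · simp [qInv, h.not_ge, show ¬ (1 ≤ n) by omega]
  · subst h; simp [qInv]
  · obtain ⟨m, rfl⟩ : ∃ m : ℕ, n = (m + 1 : ℕ) := ⟨(n - 1).toNat, by omega⟩
    have e : ((m + 1 : ℕ) : ℤ) - 1 = (m : ℕ) := by push_cast; ring
    rw [e]
    have hpos : 0 < 1 - p ^ (m + 1) := by
      have := pow_lt_one₀ h0.le h1 (show m + 1 ≠ 0 by omega)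
      linarith
    have hP := qPoch_pos h0 h1 m
    simp only [qInv, Int.natCast_nonneg, if_true, Int.toNat_natCast, zpow_natCast, qPoch_succ]
    field_simp

lemma jac_eq_zero (s : ℝ) {N k : ℕ} (h : N < k) : jac s N k = 0 := by
  have : ¬ (0 ≤ (N : ℤ) - k) := by omega
  simp only [jac, qInv, this, if_false]
  ring

/-- The coefficient recurrence behind the induction on the number of factors. The truncated
subtraction `k - 1` is right at `k = 0`, because the coefficients are symmetric under
`k ↦ -1 - k`. -/
lemma jac_succ {s : ℝ} (h0 : 0 < s) (h1 : s < 1) (N k : ℕ) :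
    jac s (N + 1) k = (1 + (s ^ 2) ^ (2 * N + 2)) * jac s N k
      + (s ^ 2) ^ (N + 1) * (jac s N (k - 1) + jac s N (k + 1)) := by
  have hp0 : 0 < s ^ 2 := by positivity
  have hp1 : s ^ 2 < 1 := pow_lt_one₀ h0.le h1 two_ne_zero
  have hprev : jac s N (k - 1) = s ^ (k * (k + 1)) / (s ^ 2) ^ k * qPoch (s ^ 2) (2 * N + 1)
      * qInv (s ^ 2) ((N : ℤ) + 1 - k) * qInv (s ^ 2) ((N : ℤ) + k) := by
    rcases k with _ | k
    · simp only [jac, Nat.zero_sub, Nat.cast_zero, sub_zero, add_zero, zero_mul, pow_zero]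
      ring
    · have e : s ^ ((k + 1) * (k + 1 + 1)) / (s ^ 2) ^ (k + 1) = s ^ (k * (k + 1)) := by
        field_simp; ring
      rw [e]
      simp only [jac, Nat.add_sub_cancel]
      push_cast
      rw [show (N : ℤ) + 1 - (k + 1) = N - k by ring, show (N : ℤ) + (k + 1) = N + k + 1 by ring]
  rw [hprev]
  have r1 := qInv_rec hp0 hp1 ((N : ℤ) + 1 - k)
  have r2 := qInv_rec hp0 hp1 ((N : ℤ) - k)
  have r3 := qInv_rec hp0 hp1 ((N : ℤ) + k + 2)
  have r4 := qInv_rec hp0 hp1 ((N : ℤ) + k + 1)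
  have z1 : (s ^ 2) ^ ((N : ℤ) + 1 - k) = (s ^ 2) ^ (N + 1) / (s ^ 2) ^ k := by
    rw [zpow_sub₀ hp0.ne']; norm_cast
  have z2 : (s ^ 2) ^ ((N : ℤ) - k) = (s ^ 2) ^ N / (s ^ 2) ^ k := by
    rw [zpow_sub₀ hp0.ne']; norm_cast
  have z3 : (s ^ 2) ^ ((N : ℤ) + k + 2) = (s ^ 2) ^ (N + 1) * (s ^ 2) ^ k * s ^ 2 := by
    rw [show (N : ℤ) + k + 2 = ((N + 1 + k + 1 : ℕ) : ℤ) by push_cast; ring, zpow_natCast]; ring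
  have z4 : (s ^ 2) ^ ((N : ℤ) + k + 1) = (s ^ 2) ^ (N + 1) * (s ^ 2) ^ k := by
    rw [show (N : ℤ) + k + 1 = ((N + 1 + k : ℕ) : ℤ) by push_cast; ring, zpow_natCast]; ring
  rw [z1, show (N : ℤ) + 1 - k - 1 = N - k by ring] at r1
  rw [z2, r1] at r2
  rw [z3, show (N : ℤ) + k + 2 - 1 = N + k + 1 by ring] at r3
  rw [z4, r3, show (N : ℤ) + k + 1 - 1 = N + k by ring] at r4
  have hQ : qPoch (s ^ 2) (2 * (N + 1) + 1) = qPoch (s ^ 2) (2 * N + 1)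
      * (1 - (s ^ 2) ^ (2 * N + 2)) * (1 - (s ^ 2) ^ (2 * N + 3)) := by
    rw [show 2 * (N + 1) + 1 = 2 * N + 1 + 1 + 1 by ring, qPoch_succ, qPoch_succ]
  simp only [jac, hQ]
  push_cast
  rw [show (N : ℤ) + 1 + k + 1 = N + k + 2 by ring, show (N : ℤ) - (k + 1) = N - k - 1 by ring,
    show (N : ℤ) + (k + 1) + 1 = N + k + 2 by ring, r4, r3, r2, r1]
  have eA : (s ^ 2) ^ (N + 1) = (s ^ 2) ^ N * s ^ 2 := pow_succ _ _
  have eA2 : (s ^ 2) ^ (2 * N + 2) = ((s ^ 2) ^ N) ^ 2 * (s ^ 2) ^ 2 := by ring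
  have eA3 : (s ^ 2) ^ (2 * N + 3) = ((s ^ 2) ^ N) ^ 2 * (s ^ 2) ^ 3 := by ring
  have eT : s ^ ((k + 1) * (k + 1 + 1)) = s ^ (k * (k + 1)) * (s ^ 2) ^ k * s ^ 2 := by ring
  rw [eA, eA2, eA3, eT]
  have hz : (s ^ 2) ^ k ≠ 0 := by positivity
  generalize (s ^ 2) ^ k = z at *
  generalize (s ^ 2) ^ N = A at *
  generalize s ^ (k * (k + 1)) = B at *
  generalize qPoch (s ^ 2) (2 * N + 1) = C at *
  generalize qInv (s ^ 2) ((N : ℤ) + 1 - k) = X at *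
  generalize qInv (s ^ 2) ((N : ℤ) + k + 2) = Y at *
  field_simp
  ring

lemma summable_jac (s : ℝ) (N : ℕ) (c : ℕ → ℝ) : Summable fun k => jac s N k * c k := by
  refine summable_of_ne_finset_zero (s := Finset.range (N + 1)) fun k hk => ?_
  rw [jac_eq_zero s (by simpa using hk), zero_mul]

/-- The finite Jacobi triple product, in real form: the factor with index `j` is
`(1 + s^{2(j+1)} e^{2iφ}) (1 + s^{2(j+1)} e^{-2iφ})`. The sum is finite, since `jac s N k = 0` for
`N < k`. -/
lemma tsum_jac_eq {s : ℝ} (h0 : 0 < s) (h1 : s < 1) (φ : ℝ) (N : ℕ) :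
    ∑' k : ℕ, jac s N k * Real.cos ((2 * k + 1) * φ) = Real.cos φ *
      ∏ j ∈ Finset.range N,
        (1 + (s ^ 2) ^ (2 * j + 2) + (s ^ 2) ^ (j + 1) * (2 * Real.cos (2 * φ))) := by
  have hp0 : 0 < s ^ 2 := by positivity
  have hp1 : s ^ 2 < 1 := pow_lt_one₀ h0.le h1 two_ne_zero
  induction N with
  | zero =>
    rw [tsum_eq_single 0 fun k hk => by rw [jac_eq_zero s (Nat.pos_of_ne_zero hk), zero_mul]]
    have := qPoch_pos hp0 hp1 1
    have e0 : qPoch (s ^ 2) 0 = 1 := by simp [qPoch]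
    simp [jac, qInv, e0, this.ne']
  | succ N ih =>
    rw [Finset.prod_range_succ, ← mul_assoc, ← ih]
    set c : ℕ → ℝ := fun k => Real.cos ((2 * k + 1) * φ) with hc
    set D := 2 * Real.cos (2 * φ)
    have hc0 : D * c 0 = c 0 + c 1 := by
      simp only [hc, D]; push_cast
      rw [show (2 * 0 + 1) * φ = φ by ring, show (2 * 1 + 1) * φ = 2 * φ + φ by ring,
        Real.cos_add, Real.cos_two_mul, Real.sin_two_mul]
      nlinarith [Real.sin_sq_add_cos_sq φ, congrArg (· * Real.cos φ) (Real.sin_sq_add_cos_sq φ)]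
    have hcs : ∀ k, D * c (k + 1) = c k + c (k + 2) := by
      intro k
      simp only [hc, D]; push_cast
      rw [show (2 * (k : ℝ) + 1) * φ = (2 * (k + 1) + 1) * φ - 2 * φ by ring,
        show (2 * ((k : ℝ) + 2) + 1) * φ = (2 * (k + 1) + 1) * φ + 2 * φ by ring,
        Real.cos_add, Real.cos_sub]
      ring
    -- Shifting indices moves the neighbours `k ± 1` from the coefficients to the cosines. The
    -- term `k = 0` fits because `k - 1 = 0` there and the cosines satisfy `c (-1) = c 0`.
    have hshift : ∑' k, (jac s N (k - 1) + jac s N (k + 1)) * c k = D * ∑' k, jac s N k * c k := by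
      have hsm1 : Summable fun k => jac s N k * c (k + 1) := summable_jac s N _
      have hsm2 : Summable fun k => jac s N (k + 1) * c k := by
        refine summable_of_ne_finset_zero (s := Finset.range (N + 1)) fun k hk => ?_
        rw [jac_eq_zero s (by simp at hk; omega), zero_mul]
      have hsm2' : Summable fun k => jac s N (k + 1) * c (k + 2) := by
        refine summable_of_ne_finset_zero (s := Finset.range (N + 1)) fun k hk => ?_
        rw [jac_eq_zero s (by simp at hk; omega), zero_mul]
      have hsm3 : Summable fun k => jac s N (k - 1) * c k := by
        rw [← summable_nat_add_iff 1]
        simpa using hsm1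
      have E1 : ∑' k, jac s N (k - 1) * c k = jac s N 0 * c 0 + ∑' k, jac s N k * c (k + 1) := by
        rw [hsm3.tsum_eq_zero_add]; simp
      have E2 : ∑' k, jac s N k * c (k + 1)
          = jac s N 0 * c 1 + ∑' k, jac s N (k + 1) * c (k + 2) := by
        rw [hsm1.tsum_eq_zero_add]
      have E3 : D * ∑' k, jac s N k * c k = jac s N 0 * (c 0 + c 1)
          + (∑' k, jac s N (k + 1) * c k + ∑' k, jac s N (k + 1) * c (k + 2)) := by
        rw [← hsm2.tsum_add hsm2', (summable_jac s N c).tsum_eq_zero_add, mul_add, ← hc0,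
          ← tsum_mul_left]
        congr 1
        · ring
        · refine tsum_congr fun k => ?_
          rw [← mul_add, ← hcs]; ring
      rw [E3]
      simp only [add_mul]
      rw [hsm3.tsum_add hsm2, E1, E2]
      ring
    have hS : Summable fun k => (jac s N (k - 1) + jac s N (k + 1)) * c k := by
      refine summable_of_ne_finset_zero (s := Finset.range (N + 2)) fun k hk => ?_
      simp at hk
      rw [jac_eq_zero s (by omega), jac_eq_zero s (by omega), zero_add, zero_mul]
    calc ∑' k, jac s (N + 1) k * c k
        = ∑' k, ((1 + (s ^ 2) ^ (2 * N + 2)) * (jac s N k * c k)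
            + (s ^ 2) ^ (N + 1) * ((jac s N (k - 1) + jac s N (k + 1)) * c k)) := by
          refine tsum_congr fun k => ?_
          rw [jac_succ h0 h1]; ring
      _ = _ := by
          rw [((summable_jac s N c).mul_left _).tsum_add (hS.mul_left _), tsum_mul_left,
            tsum_mul_left, hshift]
          ring

/-! ### Positivity of the theta series -/

/-- Letting the number of factors tend to infinity in the finite triple product shows that the
theta series is positive: each factor is at least `(1 - s^{2j})²`, and the product of these stays
away from `0`. -/
lemma theta_pos {s : ℝ} (h0 : 0 < s) (h1 : s < 1) {φ : ℝ} (hφ : 0 < Real.cos φ) :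
    0 < ∑' k : ℕ, s ^ (k * (k + 1)) * Real.cos ((2 * k + 1) * φ) := by
  have hp0 : 0 < s ^ 2 := by positivity
  have hp1 : s ^ 2 < 1 := pow_lt_one₀ h0.le h1 two_ne_zero
  obtain ⟨L, hL, hLle⟩ := exists_le_qPoch hp0 hp1
  obtain ⟨l, hlim⟩ : ∃ l, Tendsto (qPoch (s ^ 2)) atTop (𝓝 l) :=
    ⟨_, tendsto_atTop_ciInf (qPoch_antitone hp0 hp1) ⟨L, by rintro _ ⟨n, rfl⟩; exact hLle n⟩⟩
  have hl : 0 < l := hL.trans_le (ge_of_tendsto' hlim hLle)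
  have hqInv : ∀ n, 0 ≤ qInv (s ^ 2) n ∧ qInv (s ^ 2) n ≤ L⁻¹ := by
    intro n
    unfold qInv
    split_ifs
    · exact ⟨(inv_pos.2 (qPoch_pos hp0 hp1 _)).le, inv_anti₀ hL (hLle _)⟩
    · exact ⟨le_rfl, (inv_pos.2 hL).le⟩
  have hqlim : ∀ d : ℤ, Tendsto (fun N : ℕ => qInv (s ^ 2) ((N : ℤ) + d)) atTop (𝓝 l⁻¹) := by
    intro d
    have h1 : Tendsto (fun N : ℕ => ((N : ℤ) + d).toNat) atTop atTop := by
      refine tendsto_atTop.2 fun b => ?_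
      filter_upwards [eventually_ge_atTop (b + d.natAbs)] with N hN
      omega
    refine ((hlim.comp h1).inv₀ hl.ne').congr' ?_
    filter_upwards [eventually_ge_atTop d.natAbs] with N hN
    simp [qInv, show 0 ≤ (N : ℤ) + d by omega]
  have hsum : Summable fun k : ℕ => s ^ (k * (k + 1)) * (1 * L⁻¹ * L⁻¹) := by
    refine Summable.mul_right _ (Summable.of_nonneg_of_le (fun k => by positivity) (fun k => ?_)
      (summable_geometric_of_lt_one h0.le h1))
    exact pow_le_pow_of_le_one h0.le h1.le (by nlinarith)
  have hT : Tendsto (fun N : ℕ => ∑' k : ℕ, jac s N k * Real.cos ((2 * k + 1) * φ)) atTop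
      (𝓝 (∑' k : ℕ, s ^ (k * (k + 1)) * l * l⁻¹ * l⁻¹ * Real.cos ((2 * k + 1) * φ))) := by
    refine tendsto_tsum_of_dominated_convergence hsum (fun k => ?_) (Eventually.of_forall ?_)
    · refine Tendsto.mul_const _ ?_
      refine Tendsto.mul (Tendsto.mul (Tendsto.mul tendsto_const_nhds ?_) ?_) ?_
      · exact hlim.comp (tendsto_atTop.2 fun b => by
          filter_upwards [eventually_ge_atTop b] with N hN
          omega)
      · simpa [sub_eq_add_neg] using hqlim (-(k : ℤ))
      · simpa [add_assoc] using hqlim ((k : ℤ) + 1)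
    · intro N k
      rw [norm_mul]
      have h3 : 0 ≤ qPoch (s ^ 2) (2 * N + 1) := (qPoch_pos hp0 hp1 _).le
      have h4 := qPoch_le_one hp0 hp1 (2 * N + 1)
      have a1 := hqInv ((N : ℤ) - k)
      have a2 := hqInv ((N : ℤ) + k + 1)
      have hj0 : 0 ≤ jac s N k := by
        unfold jac
        exact mul_nonneg (mul_nonneg (mul_nonneg (by positivity) h3) a1.1) a2.1
      refine (mul_le_of_le_one_right (norm_nonneg _) (Real.abs_cos_le_one _)).trans ?_
      rw [Real.norm_of_nonneg hj0, jac, mul_assoc, mul_assoc, ← mul_assoc (qPoch _ _)]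
      refine mul_le_mul_of_nonneg_left ?_ (by positivity)
      exact mul_le_mul (mul_le_mul h4 a1.2 a1.1 zero_le_one) a2.2 a2.1
        (mul_nonneg zero_le_one (inv_pos.2 hL).le)
  have hlow : ∀ N : ℕ, Real.cos φ * L ^ 2
      ≤ ∑' k : ℕ, jac s N k * Real.cos ((2 * k + 1) * φ) := by
    intro N
    rw [tsum_jac_eq h0 h1]
    refine mul_le_mul_of_nonneg_left ?_ hφ.le
    calc L ^ 2 ≤ qPoch (s ^ 2) N ^ 2 := by gcongr; exact hLle N
      _ = ∏ j ∈ Finset.range N, (1 - (s ^ 2) ^ (j + 1)) ^ 2 := by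
        rw [qPoch, Finset.prod_pow]
      _ ≤ _ := by
        refine Finset.prod_le_prod (fun j _ => sq_nonneg _) fun j _ => ?_
        have := pow_pos hp0 (j + 1)
        have := Real.neg_one_le_cos (2 * φ)
        rw [show (s ^ 2) ^ (2 * j + 2) = ((s ^ 2) ^ (j + 1)) ^ 2 by ring]
        nlinarith
  have hge := ge_of_tendsto' hT hlow
  have heq : ∑' k : ℕ, s ^ (k * (k + 1)) * l * l⁻¹ * l⁻¹ * Real.cos ((2 * k + 1) * φ)
      = l⁻¹ * ∑' k : ℕ, s ^ (k * (k + 1)) * Real.cos ((2 * k + 1) * φ) := by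
    rw [← tsum_mul_left]
    refine tsum_congr fun k => ?_
    field_simp
  rw [heq] at hge
  have hpos : 0 < l⁻¹ * ∑' k : ℕ, s ^ (k * (k + 1)) * Real.cos ((2 * k + 1) * φ) :=
    lt_of_lt_of_le (by positivity) hge
  exact (pos_iff_pos_of_mul_pos hpos).1 (inv_pos.2 hl)

/-- On `(0, π)`, the theta series vanishes only at `π / 2`. -/
lemma theta_eq_zero_iff {s : ℝ} (h0 : 0 < s) (h1 : s < 1) {φ : ℝ} (hφ : φ ∈ Ioo 0 π) :
    ∑' k : ℕ, s ^ (k * (k + 1)) * Real.cos ((2 * k + 1) * φ) = 0 ↔ φ = π / 2 := by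
  have hrefl : ∀ k : ℕ, Real.cos ((2 * k + 1) * (π - φ)) = -Real.cos ((2 * k + 1) * φ) := by
    intro k
    rw [show (2 * (k : ℝ) + 1) * (π - φ) = π - (2 * k + 1) * φ + k * (2 * π) by ring,
      Real.cos_add_nat_mul_two_pi, Real.cos_pi_sub]
  have hneg : ∑' k : ℕ, s ^ (k * (k + 1)) * Real.cos ((2 * k + 1) * (π - φ))
      = -∑' k : ℕ, s ^ (k * (k + 1)) * Real.cos ((2 * k + 1) * φ) := by
    rw [← tsum_neg]
    refine tsum_congr fun k => ?_
    rw [hrefl]; ring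
  obtain ⟨hφ0, hφ1⟩ := hφ
  rcases lt_trichotomy φ (π / 2) with h | h | h
  · have := theta_pos h0 h1 (Real.cos_pos_of_mem_Ioo ⟨by linarith, h⟩)
    exact ⟨fun h' => absurd h' this.ne', fun h' => absurd h' h.ne⟩
  · refine ⟨fun _ => h, fun _ => ?_⟩
    rw [show π - φ = φ by linarith] at hneg
    linarith
  · have := theta_pos h0 h1 (φ := π - φ)
      (Real.cos_pos_of_mem_Ioo ⟨by linarith, by linarith⟩)
    rw [hneg] at this
    exact ⟨fun h' => by linarith, fun h' => absurd h'.symm h.ne⟩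

/-! ### Termwise differentiation -/

/-- The series `∑ c n * r ^ (e n) * sin (mₙ θ + φ)`. The phase `φ` makes the family closed under
partial derivatives. -/
noncomputable def ser (c : ℕ → ℝ) (e : ℕ → ℕ) (φ r θ : ℝ) : ℝ :=
  ∑' n, c n * r ^ e n * Real.sin (mIdx n * θ + φ)

lemma sin_add_phase (x φ : ℝ) : Real.sin (x + (φ + π / 2)) = Real.cos (x + φ) := by
  rw [← add_assoc, Real.sin_add_pi_div_two]

/-- Series with polynomially bounded coefficients and exponents between `n + 1` and `16 (n + 1)²`
can be differentiated termwise for `|r| < 1`. -/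
lemma hasFDerivAt_ser {c : ℕ → ℝ} {e : ℕ → ℕ} {C : ℝ} {k : ℕ}
    (hc : ∀ n, |c n| ≤ C * ((n : ℝ) + 1) ^ k) (he : ∀ n, n + 1 ≤ e n)
    (he' : ∀ n, e n ≤ 16 * (n + 1) ^ 2) (φ : ℝ) {r : ℝ} (hr : |r| < 1) (θ : ℝ) :
    HasFDerivAt (fun x : ℝ × ℝ => ser c e φ x.1 x.2)
      (ser (fun n => c n * e n) (fun n => e n - 1) φ r θ • ContinuousLinearMap.fst ℝ ℝ ℝ
        + ser (fun n => c n * mIdx n) e (φ + π / 2) r θ • ContinuousLinearMap.snd ℝ ℝ ℝ)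
      (r, θ) := by
  obtain ⟨ρ, hrρ, hρ1⟩ := exists_between hr
  have hρ0 : 0 < ρ := (abs_nonneg r).trans_lt hrρ
  have hC : 0 ≤ C := by
    have := (abs_nonneg _).trans (hc 0)
    simpa using this
  -- `v` dominates both termwise partial derivatives, and the terms, on the strip `|x.1| < ρ`.
  set v : ℕ → ℝ := fun n => (16 * C) * (((n : ℝ) + 1) ^ (k + 2) * ρ ^ n) with hv
  have hvs : Summable v := by
    refine Summable.mul_left _ ?_
    have h := summable_pow_mul_geometric_of_norm_lt_one (k + 2) (r := ρ)
      (by rwa [Real.norm_of_nonneg hρ0.le])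
    have h2 := ((summable_nat_add_iff 1).2 h).mul_right ρ⁻¹
    refine h2.congr fun n => ?_
    push_cast
    rw [pow_succ ρ n]
    field_simp
  set a : ℕ → ℝ × ℝ → ℝ := fun n x =>
    c n * e n * x.1 ^ (e n - 1) * Real.sin (mIdx n * x.2 + φ) with ha
  set b : ℕ → ℝ × ℝ → ℝ := fun n x =>
    c n * mIdx n * x.1 ^ (e n) * Real.sin (mIdx n * x.2 + (φ + π / 2)) with hb
  set S : Set (ℝ × ℝ) := Ioo (-ρ) ρ ×ˢ univ with hS
  have hSmem : ∀ x ∈ S, |x.1| ≤ ρ := fun x hx => abs_le.2 ⟨hx.1.1.le, hx.1.2.le⟩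
  have hpow : ∀ x ∈ S, ∀ n d, n ≤ d → |x.1 ^ d| ≤ ρ ^ n := by
    intro x hx n d hnd
    rw [abs_pow]
    exact (pow_le_pow_left₀ (abs_nonneg _) (hSmem x hx) _).trans
      (pow_le_pow_of_le_one hρ0.le hρ1.le hnd)
  have bound : ∀ x ∈ S, ∀ (n d : ℕ) (w y : ℝ), n ≤ d → |w| ≤ 16 * ((n : ℝ) + 1) ^ 2 →
      ‖c n * w * x.1 ^ d * Real.sin y‖ ≤ v n := by
    intro x hx n d w y hnd hw
    rw [Real.norm_eq_abs, abs_mul, abs_mul, abs_mul]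
    calc |c n| * |w| * |x.1 ^ d| * |Real.sin y|
        ≤ (C * ((n : ℝ) + 1) ^ k) * (16 * ((n : ℝ) + 1) ^ 2) * ρ ^ n * 1 := by
          have h1 := hc n
          have h2 := hpow x hx n d hnd
          have h3 := Real.abs_sin_le_one y
          gcongr
      _ = v n := by simp only [hv]; ring
  have hm : ∀ n : ℕ, |(mIdx n : ℝ)| ≤ 16 * ((n : ℝ) + 1) ^ 2 := by
    intro n
    rw [abs_of_nonneg (by positivity)]
    have : (0 : ℝ) ≤ n := by positivity
    simp only [mIdx]; push_cast; nlinarith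
  have hE : ∀ n : ℕ, |(e n : ℝ)| ≤ 16 * ((n : ℝ) + 1) ^ 2 := by
    intro n
    rw [abs_of_nonneg (by positivity)]
    exact_mod_cast he' n
  have ba : ∀ n, ∀ x ∈ S, ‖a n x‖ ≤ v n := fun n x hx =>
    bound x hx n _ _ _ (by have := he n; omega) (hE n)
  have bb : ∀ n, ∀ x ∈ S, ‖b n x‖ ≤ v n := fun n x hx =>
    bound x hx n _ _ _ (by have := he n; omega) (hm n)
  have hx0 : (r, θ) ∈ S := ⟨abs_lt.1 hrρ, mem_univ _⟩
  have hf0 : Summable fun n => c n * r ^ e n * Real.sin (mIdx n * θ + φ) := by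
    refine Summable.of_norm_bounded hvs fun n => ?_
    have := bound (r, θ) hx0 n (e n) 1 (mIdx n * θ + φ) (by have := he n; omega) (by
      rw [abs_one]
      have : (0 : ℝ) ≤ n := by positivity
      nlinarith)
    simpa using this
  have key := hasFDerivAt_tsum_of_isPreconnected (𝕜 := ℝ) (hvs.add hvs) (s := S)
    (isOpen_Ioo.prod isOpen_univ) (isPreconnected_Ioo.prod isPreconnected_univ)
    (f := fun n (x : ℝ × ℝ) => c n * x.1 ^ e n * Real.sin (mIdx n * x.2 + φ))
    (f' := fun n x => a n x • ContinuousLinearMap.fst ℝ ℝ ℝ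
      + b n x • ContinuousLinearMap.snd ℝ ℝ ℝ) ?_ ?_ hx0 hf0 hx0
  · have sa : Summable fun n => a n (r, θ) := Summable.of_norm_bounded hvs fun n => ba n _ hx0
    have sb : Summable fun n => b n (r, θ) := Summable.of_norm_bounded hvs fun n => bb n _ hx0
    rw [(sa.smul_const _).tsum_add (sb.smul_const _), sa.tsum_smul_const, sb.tsum_smul_const]
      at key
    exact key
  · intro n x _
    have h1 : HasFDerivAt (fun x : ℝ × ℝ => x.1 ^ e n)
        (((e n : ℝ) * x.1 ^ (e n - 1)) • ContinuousLinearMap.fst ℝ ℝ ℝ) x :=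
      (hasDerivAt_pow (e n) x.1).comp_hasFDerivAt x hasFDerivAt_fst
    have h2 : HasFDerivAt (fun x : ℝ × ℝ => Real.sin (mIdx n * x.2 + φ))
        ((Real.cos (mIdx n * x.2 + φ)) • ((mIdx n : ℝ) • ContinuousLinearMap.snd ℝ ℝ ℝ)) x :=
      (Real.hasDerivAt_sin _).comp_hasFDerivAt x ((hasFDerivAt_snd.const_mul _).add_const _)
    convert! (h1.const_mul (c n)).mul h2 using 1
    simp only [ha, hb, sin_add_phase]
    ext <;> simp <;> ring
  · intro n x hx
    refine (norm_add_le _ _).trans (add_le_add ?_ ?_) <;> rw [norm_smul]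
    · exact (mul_le_of_le_one_right (norm_nonneg _) (ContinuousLinearMap.norm_fst_le ℝ ℝ ℝ)).trans
        (ba n x hx)
    · exact (mul_le_of_le_one_right (norm_nonneg _) (ContinuousLinearMap.norm_snd_le ℝ ℝ ℝ)).trans
        (bb n x hx)

/-! ### Partial derivatives of `W` -/

/-- The coefficient `1 / ((mₙ² - 1) mₙ)` of `W`, up to the factor `8 / π`. -/
noncomputable def coef (n : ℕ) : ℝ := 1 / (((mIdx n : ℝ) ^ 2 - 1) * mIdx n)

/-- `W_r`, as the termwise differentiated series. -/
noncomputable def Wr (r θ : ℝ) : ℝ :=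
  (8 / π) * ser (fun n => coef n * (mIdx n ^ 2 : ℕ)) (fun n => mIdx n ^ 2 - 1) 0 r θ

/-- `W_θ`, as the termwise differentiated series; the phase `π / 2` turns the sines into cosines. -/
noncomputable def Wt (r θ : ℝ) : ℝ :=
  (8 / π) * ser (fun n => coef n * mIdx n) (fun n => mIdx n ^ 2) (0 + π / 2) r θ

/-- `W_rr`, as the termwise differentiated series. -/
noncomputable def Wrr (r θ : ℝ) : ℝ :=
  (8 / π) * ser (fun n => coef n * (mIdx n ^ 2 : ℕ) * (mIdx n ^ 2 - 1 : ℕ))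
    (fun n => mIdx n ^ 2 - 1 - 1) 0 r θ

/-- `W_rθ`, as the termwise differentiated series. -/
noncomputable def Wrt (r θ : ℝ) : ℝ :=
  (8 / π) * ser (fun n => coef n * (mIdx n ^ 2 : ℕ) * mIdx n)
    (fun n => mIdx n ^ 2 - 1) (0 + π / 2) r θ

lemma mIdx_sq (n : ℕ) : mIdx n ^ 2 = 16 * n ^ 2 + 16 * n + 4 := by
  simp only [mIdx]; ring

lemma abs_coef_mul_le (n : ℕ) {x : ℝ} : |coef n * x| ≤ |x| := by
  rw [abs_mul]
  refine mul_le_of_le_one_left (abs_nonneg _) ?_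
  have h : (2 : ℝ) ≤ mIdx n := by simp [mIdx]
  have h2 : (1 : ℝ) ≤ ((mIdx n : ℝ) ^ 2 - 1) * mIdx n := by nlinarith
  rw [coef, abs_of_nonneg (by positivity), div_le_one (by linarith)]
  exact h2

lemma W_eq (r θ : ℝ) : W r θ = (8 / π) * ser coef (fun n => mIdx n ^ 2) 0 r θ := by
  rw [W, ser]
  congr 1
  refine tsum_congr fun n => ?_
  rw [coef, add_zero]; ring

lemma hasFDerivAt_W {r : ℝ} (hr : |r| < 1) (θ : ℝ) :
    HasFDerivAt (fun x : ℝ × ℝ => W x.1 x.2) (Wr r θ • ContinuousLinearMap.fst ℝ ℝ ℝ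
      + Wt r θ • ContinuousLinearMap.snd ℝ ℝ ℝ) (r, θ) := by
  have h := (hasFDerivAt_ser (c := coef) (e := fun n => mIdx n ^ 2) (C := 1) (k := 0)
    (fun n => by simpa using abs_coef_mul_le n (x := 1))
    (fun n => by simp only [mIdx_sq]; nlinarith)
    (fun n => by simp only [mIdx_sq]; nlinarith) 0 hr θ).const_mul (8 / π)
  simp only [W_eq]
  convert! h using 1
  simp only [Wr, Wt, smul_add, smul_smul]

lemma hasFDerivAt_Wr {r : ℝ} (hr : |r| < 1) (θ : ℝ) :
    HasFDerivAt (fun x : ℝ × ℝ => Wr x.1 x.2) (Wrr r θ • ContinuousLinearMap.fst ℝ ℝ ℝ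
      + Wrt r θ • ContinuousLinearMap.snd ℝ ℝ ℝ) (r, θ) := by
  have h := (hasFDerivAt_ser (c := fun n => coef n * (mIdx n ^ 2 : ℕ))
    (e := fun n => mIdx n ^ 2 - 1) (C := 16) (k := 2)
    (fun n => by
      refine (abs_coef_mul_le n).trans ?_
      rw [Nat.abs_cast, mIdx_sq]; push_cast; nlinarith [Nat.cast_nonneg (α := ℝ) n])
    (fun n => by simp only [mIdx_sq]; have := Nat.zero_le (n ^ 2); omega)
    (fun n => by
      simp only [mIdx_sq]
      exact (Nat.sub_le _ _).trans (by nlinarith)) 0 hr θ).const_mul (8 / π)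
  simp only [Wr]
  convert! h using 1
  simp only [Wrr, Wrt, smul_add, smul_smul]

/-- The equation `W_θθ = -r W_r` satisfied by every term of the series enters through the second
partial derivative; the first one uses the symmetry of mixed derivatives. -/
lemma hasFDerivAt_Wt {r : ℝ} (hr : |r| < 1) (θ : ℝ) :
    HasFDerivAt (fun x : ℝ × ℝ => Wt x.1 x.2) (Wrt r θ • ContinuousLinearMap.fst ℝ ℝ ℝ
      + (-(r * Wr r θ)) • ContinuousLinearMap.snd ℝ ℝ ℝ) (r, θ) := by
  have h := (hasFDerivAt_ser (c := fun n => coef n * mIdx n)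
    (e := fun n => mIdx n ^ 2) (C := 4) (k := 1)
    (fun n => by
      refine (abs_coef_mul_le n).trans ?_
      rw [Nat.abs_cast, mIdx]; push_cast; nlinarith [Nat.cast_nonneg (α := ℝ) n])
    (fun n => by simp only [mIdx_sq]; nlinarith)
    (fun n => by simp only [mIdx_sq]; nlinarith) (0 + π / 2) hr θ).const_mul (8 / π)
  simp only [Wt]
  convert! h using 1
  rw [smul_add, smul_smul, smul_smul]
  congr 2
  · rw [Wrt, ser, ser]
    congr 1
    refine tsum_congr fun n => ?_
    ring
  · rw [Wr, ser, ser, ← neg_mul, mul_left_comm, ← tsum_mul_left]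
    congr 1
    refine tsum_congr fun n => ?_
    have e1 : r ^ mIdx n ^ 2 = r * r ^ (mIdx n ^ 2 - 1) := by
      rw [← pow_succ', Nat.sub_add_cancel (by rw [mIdx_sq]; omega)]
    rw [sin_add_phase, ← add_assoc, Real.cos_add_pi_div_two, e1]
    push_cast
    ring

/-- The combination `W_rθ - W_θ / r` cancels the factor `mₙ² - 1` in the denominators and is a theta
series. -/
lemma Wrt_sub {r : ℝ} (hr0 : 0 < r) (hr1 : r < 1) (θ : ℝ) : Wrt r θ - r⁻¹ * Wt r θ
    = 8 / π * r ^ 3 *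
      ∑' k : ℕ, (r ^ 16) ^ (k * (k + 1)) * Real.cos ((2 * k + 1) * (2 * θ)) := by
  have hr : |r| < 1 := by rwa [abs_of_pos hr0]
  have bd : ∀ n, r ^ (mIdx n ^ 2 - 1) ≤ r ^ n := fun n =>
    pow_le_pow_of_le_one hr0.le hr1.le (by rw [mIdx_sq]; have := Nat.zero_le (n ^ 2); omega)
  have hgeo : Summable fun n : ℕ => ((n : ℝ) + 1) ^ 3 * r ^ (n + 1) := by
    have h := summable_pow_mul_geometric_of_norm_lt_one 3 (r := r) hr
    refine ((summable_nat_add_iff 1).2 h).congr fun n => ?_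
    push_cast; ring
  have hgeo' := (hgeo.mul_left (64 * r⁻¹))
  have s1 : Summable fun n => coef n * (mIdx n ^ 2 : ℕ) * mIdx n * r ^ (mIdx n ^ 2 - 1)
      * Real.sin (mIdx n * θ + (0 + π / 2)) := by
    refine Summable.of_norm_bounded hgeo' fun n => ?_
    rw [norm_mul, norm_mul, mul_assoc (coef n)]
    have h1 : ‖coef n * ((mIdx n ^ 2 : ℕ) * mIdx n)‖ ≤ 64 * ((n : ℝ) + 1) ^ 3 := by
      refine (abs_coef_mul_le n).trans ?_
      rw [abs_of_nonneg (by positivity)]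
      have : (mIdx n : ℝ) ≤ 4 * (n + 1) := by simp only [mIdx]; push_cast; linarith
      calc ((mIdx n ^ 2 : ℕ) : ℝ) * mIdx n = (mIdx n : ℝ) ^ 3 := by push_cast; ring
        _ ≤ (4 * (n + 1)) ^ 3 := by gcongr
        _ = _ := by ring
    have h2 : ‖r ^ (mIdx n ^ 2 - 1)‖ ≤ r ^ n := by
      rw [Real.norm_of_nonneg (by positivity)]; exact bd n
    calc _ ≤ 64 * ((n : ℝ) + 1) ^ 3 * r ^ n * 1 :=
          mul_le_mul (mul_le_mul h1 h2 (norm_nonneg _) (by positivity)) (Real.abs_sin_le_one _)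
            (abs_nonneg _) (by positivity)
      _ = _ := by rw [pow_succ r]; field_simp
  have s2 : Summable fun n => r⁻¹ * (coef n * mIdx n * r ^ mIdx n ^ 2
      * Real.sin (mIdx n * θ + (0 + π / 2))) := by
    refine Summable.of_norm_bounded s1.norm fun n => ?_
    have e1 : r ^ mIdx n ^ 2 = r * r ^ (mIdx n ^ 2 - 1) := by
      rw [← pow_succ', Nat.sub_add_cancel (by rw [mIdx_sq]; omega)]
    have e2 : coef n * (mIdx n ^ 2 : ℕ) * mIdx n * r ^ (mIdx n ^ 2 - 1)
        * Real.sin (mIdx n * θ + (0 + π / 2)) = (mIdx n ^ 2 : ℕ) * (r⁻¹ * (coef n * mIdx n *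
          r ^ mIdx n ^ 2 * Real.sin (mIdx n * θ + (0 + π / 2)))) := by
      rw [e1]; field_simp
    rw [e2, norm_mul (((mIdx n ^ 2 : ℕ) : ℝ))]
    refine le_mul_of_one_le_left (norm_nonneg _) ?_
    rw [Real.norm_natCast]
    exact_mod_cast (by rw [mIdx_sq]; omega : 1 ≤ mIdx n ^ 2)
  rw [Wrt, Wt, ser, ser, mul_left_comm, ← mul_sub, mul_assoc]
  congr 1
  rw [← tsum_mul_left, ← s1.tsum_sub s2, ← tsum_mul_left]
  refine tsum_congr fun n => ?_
  -- With `mₙ = 2 (2 n + 1)` the exponent `mₙ² - 1` equals `16 n (n + 1) + 3`.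
  have e0 : mIdx n ^ 2 = 16 * (n * (n + 1)) + 4 := by rw [mIdx_sq]; ring
  have e1 : r ^ mIdx n ^ 2 = r * (r ^ 3 * (r ^ 16) ^ (n * (n + 1))) := by
    rw [e0]; ring
  have e2 : r ^ (mIdx n ^ 2 - 1) = r ^ 3 * (r ^ 16) ^ (n * (n + 1)) := by
    rw [e0, show 16 * (n * (n + 1)) + 4 - 1 = 16 * (n * (n + 1)) + 3 by omega]; ring
  rw [e1, e2, sin_add_phase, add_zero]
  have hne : ((mIdx n : ℝ) ^ 2 - 1) ≠ 0 := by
    have : (2 : ℝ) ≤ mIdx n := by simp [mIdx]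
    nlinarith
  have hne2 : (mIdx n : ℝ) ≠ 0 := by simp [mIdx]; positivity
  have e3 : (mIdx n : ℝ) * θ = (2 * n + 1) * (2 * θ) := by simp only [mIdx]; push_cast; ring
  rw [e3, coef]
  push_cast
  field_simp

/-! ### Polar coordinates -/

lemma hasDerivAt_sqrt_fst {p q : ℝ} (hp : 0 < p) :
    HasDerivAt (fun s => √(s ^ 2 + q ^ 2)) (p / √(p ^ 2 + q ^ 2)) p := by
  have h : HasDerivAt (fun s : ℝ => s ^ 2 + q ^ 2) (2 * p) p := by
    simpa using (hasDerivAt_pow 2 p).add_const (q ^ 2)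
  convert! h.sqrt (by positivity) using 1
  field_simp

lemma hasDerivAt_sqrt_snd {p q : ℝ} (hp : 0 < p) :
    HasDerivAt (fun t => √(p ^ 2 + t ^ 2)) (q / √(p ^ 2 + q ^ 2)) q := by
  have h : HasDerivAt (fun t : ℝ => p ^ 2 + t ^ 2) (2 * q) q := by
    simpa using (hasDerivAt_pow 2 q).const_add (p ^ 2)
  convert! h.sqrt (by positivity) using 1
  field_simp

lemma hasDerivAt_arctan_fst {p q : ℝ} (hp : 0 < p) :
    HasDerivAt (fun s => arctan (q / s)) (-q / (p ^ 2 + q ^ 2)) p := by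
  have h : HasDerivAt (fun s : ℝ => q / s) (-q / p ^ 2) p := by
    convert! (hasDerivAt_const p q).div (hasDerivAt_id p) hp.ne' using 1
    simp
  convert! h.arctan using 1
  field_simp

lemma hasDerivAt_arctan_snd {p q : ℝ} (hp : 0 < p) :
    HasDerivAt (fun t => arctan (t / p)) (p / (p ^ 2 + q ^ 2)) q := by
  have h : HasDerivAt (fun t : ℝ => t / p) (1 / p) q := (hasDerivAt_id q).div_const p
  convert! h.arctan using 1
  field_simp

/-- Chain rule for `G` in the polar coordinates `√(p² + q²)` and `arctan (q / p)`, which is valid on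
the half-plane `p > 0`. -/
lemma comp_fst {G : ℝ → ℝ → ℝ} {a b p q : ℝ} (hp : 0 < p)
    (h : HasFDerivAt (fun x : ℝ × ℝ => G x.1 x.2) (a • ContinuousLinearMap.fst ℝ ℝ ℝ
      + b • ContinuousLinearMap.snd ℝ ℝ ℝ) (√(p ^ 2 + q ^ 2), arctan (q / p))) :
    HasDerivAt (fun s => G (√(s ^ 2 + q ^ 2)) (arctan (q / s)))
      (a * (p / √(p ^ 2 + q ^ 2)) + b * (-q / (p ^ 2 + q ^ 2))) p := by
  have := h.comp_hasDerivAt p ((hasDerivAt_sqrt_fst (q := q) hp).prodMk (hasDerivAt_arctan_fst hp))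
  convert! this using 1

lemma comp_snd {G : ℝ → ℝ → ℝ} {a b p q : ℝ} (hp : 0 < p)
    (h : HasFDerivAt (fun x : ℝ × ℝ => G x.1 x.2) (a • ContinuousLinearMap.fst ℝ ℝ ℝ
      + b • ContinuousLinearMap.snd ℝ ℝ ℝ) (√(p ^ 2 + q ^ 2), arctan (q / p))) :
    HasDerivAt (fun t => G (√(p ^ 2 + t ^ 2)) (arctan (t / p)))
      (a * (q / √(p ^ 2 + q ^ 2)) + b * (p / (p ^ 2 + q ^ 2))) q := by
  have := h.comp_hasDerivAt q ((hasDerivAt_sqrt_snd (q := q) hp).prodMk (hasDerivAt_arctan_snd hp))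
  convert! this using 1

lemma abs_sqrt_lt {x : ℝ} (h : x < 1) : |√x| < 1 := by
  rw [abs_of_nonneg (Real.sqrt_nonneg _), Real.sqrt_lt' one_pos]
  simpa using h

lemma wp_eq {p q : ℝ} (hp : 0 < p) (h1 : p ^ 2 + q ^ 2 < 1) :
    wp p q = Wr (√(p ^ 2 + q ^ 2)) (arctan (q / p)) * (p / √(p ^ 2 + q ^ 2))
      + Wt (√(p ^ 2 + q ^ 2)) (arctan (q / p)) * (-q / (p ^ 2 + q ^ 2)) :=
  (comp_fst hp (hasFDerivAt_W (abs_sqrt_lt h1) _)).deriv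

lemma wq_eq {p q : ℝ} (hp : 0 < p) (h1 : p ^ 2 + q ^ 2 < 1) :
    wq p q = Wr (√(p ^ 2 + q ^ 2)) (arctan (q / p)) * (q / √(p ^ 2 + q ^ 2))
      + Wt (√(p ^ 2 + q ^ 2)) (arctan (q / p)) * (p / (p ^ 2 + q ^ 2)) :=
  (comp_snd hp (hasFDerivAt_W (abs_sqrt_lt h1) _)).deriv

/-- The identities for the second derivatives at a point given in polar coordinates: `K` is the
combination `W_rθ - W_θ / r`, and the equation `W_θθ = -r W_r` removes all other terms except
`W_rr`. -/
lemma hessian_eq {r c s θ : ℝ} (hr0 : 0 < r) (hr1 : r < 1) (hc : 0 < c) (hcs : c ^ 2 + s ^ 2 = 1)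
    (hθ : arctan (s / c) = θ) {K : ℝ} (hK : K = Wrt r θ - r⁻¹ * Wt r θ) :
    wpp (r * c) (r * s) = Wrr r θ * c ^ 2 - 2 * K * s * c / r ∧
    wqq (r * c) (r * s) = Wrr r θ * s ^ 2 + 2 * K * s * c / r ∧
    wpq (r * c) (r * s) = Wrr r θ * s * c + K * (c ^ 2 - s ^ 2) / r := by
  have hp : 0 < r * c := mul_pos hr0 hc
  have hpq : (r * c) ^ 2 + (r * s) ^ 2 = r ^ 2 := by linear_combination r ^ 2 * hcs
  have hsq : √((r * c) ^ 2 + (r * s) ^ 2) = r := by rw [hpq, Real.sqrt_sq hr0.le]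
  have hsq' : √(r ^ 2) = r := Real.sqrt_sq hr0.le
  have hat : arctan (r * s / (r * c)) = θ := by rw [mul_div_mul_left _ _ hr0.ne', hθ]
  have hlt : (r * c) ^ 2 + (r * s) ^ 2 < 1 := by rw [hpq]; nlinarith
  have hne : (r * c) ^ 2 + (r * s) ^ 2 ≠ 0 := by rw [hpq]; positivity
  have hsne : √((r * c) ^ 2 + (r * s) ^ 2) ≠ 0 := by rw [hsq]; exact hr0.ne'
  have hs : s ^ 2 = 1 - c ^ 2 := by linarith
  have hWrt : Wrt r θ = K + r⁻¹ * Wt r θ := by linarith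
  have hcont1 : ContinuousAt (fun x : ℝ => x ^ 2 + (r * s) ^ 2) (r * c) := by fun_prop
  have hcont2 : ContinuousAt (fun y : ℝ => (r * c) ^ 2 + y ^ 2) (r * s) := by fun_prop
  -- The formulas for the first partials hold only near the point, so they enter the second partials
  -- as germs.
  have ev1 : (fun x => wp x (r * s)) =ᶠ[𝓝 (r * c)] fun x =>
      Wr (√(x ^ 2 + (r * s) ^ 2)) (arctan (r * s / x)) * (x / √(x ^ 2 + (r * s) ^ 2))
      + Wt (√(x ^ 2 + (r * s) ^ 2)) (arctan (r * s / x)) * (-(r * s) / (x ^ 2 + (r * s) ^ 2)) := by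
    filter_upwards [lt_mem_nhds hp, hcont1.eventually_lt_const hlt] with x h1 h2
    exact wp_eq h1 h2
  have ev2 : (fun y => wq (r * c) y) =ᶠ[𝓝 (r * s)] fun y =>
      Wr (√((r * c) ^ 2 + y ^ 2)) (arctan (y / (r * c))) * (y / √((r * c) ^ 2 + y ^ 2))
      + Wt (√((r * c) ^ 2 + y ^ 2)) (arctan (y / (r * c))) * (r * c / ((r * c) ^ 2 + y ^ 2)) := by
    filter_upwards [hcont2.eventually_lt_const hlt] with y h2
    exact wq_eq hp h2
  have ev3 : (fun y => wp (r * c) y) =ᶠ[𝓝 (r * s)] fun y =>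
      Wr (√((r * c) ^ 2 + y ^ 2)) (arctan (y / (r * c))) * (r * c / √((r * c) ^ 2 + y ^ 2))
      + Wt (√((r * c) ^ 2 + y ^ 2)) (arctan (y / (r * c))) * (-y / ((r * c) ^ 2 + y ^ 2)) := by
    filter_upwards [hcont2.eventually_lt_const hlt] with y h2
    exact wp_eq hp h2
  have fr := hasFDerivAt_Wr (abs_sqrt_lt hlt) (arctan (r * s / (r * c)))
  have ft := hasFDerivAt_Wt (abs_sqrt_lt hlt) (arctan (r * s / (r * c)))
  have dx := hasDerivAt_sqrt_fst (q := r * s) hp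
  have dy := hasDerivAt_sqrt_snd (q := r * s) hp
  have qx := (hasDerivAt_pow 2 (r * c)).add_const ((r * s) ^ 2)
  have qy := (hasDerivAt_pow 2 (r * s)).const_add ((r * c) ^ 2)
  have D1 := (((comp_fst hp fr).mul ((hasDerivAt_id (r * c)).div dx hsne)).add
    ((comp_fst hp ft).mul ((hasDerivAt_const (r * c) (-(r * s))).div qx hne))).congr_of_eventuallyEq
      ev1
  have D2 := (((comp_snd hp fr).mul ((hasDerivAt_id (r * s)).div dy hsne)).add
    ((comp_snd hp ft).mul ((hasDerivAt_const (r * s) (r * c)).div qy hne))).congr_of_eventuallyEq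
      ev2
  have D3 := (((comp_snd hp fr).mul ((hasDerivAt_const (r * s) (r * c)).div dy hsne)).add
    ((comp_snd hp ft).mul ((hasDerivAt_id (r * s)).neg.div qy hne))).congr_of_eventuallyEq
      ev3
  rw [wpp, wqq, wpq, D1.deriv, D2.deriv, D3.deriv]
  simp only [Pi.div_apply, Pi.neg_apply, hpq, hsq', hat, id, hWrt]
  refine ⟨?_, ?_, ?_⟩
  · field_simp
    simp only [Nat.add_one_sub_one, pow_one]
    push_cast
    ring_nf
    simp only [hs]
    ring
  · field_simp
    simp only [Nat.add_one_sub_one, pow_one]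
    push_cast
    ring_nf
    simp only [hs]
    ring
  · field_simp
    simp only [Nat.add_one_sub_one, pow_one]
    push_cast
    ring_nf
    simp only [hs]
    ring

lemma deriv_W_fst {r : ℝ} (hr : |r| < 1) (t : ℝ) : deriv (fun s => W s t) r = Wr r t := by
  have h := (hasFDerivAt_W hr t).comp_hasDerivAt r
    ((hasDerivAt_id r).prodMk (hasDerivAt_const r t))
  have hW : HasDerivAt (fun s => W s t) (Wr r t) r := by
    convert! h using 1
    simp
  exact hW.deriv

lemma deriv_W_snd {r : ℝ} (hr : |r| < 1) (t : ℝ) : deriv (fun t => W r t) t = Wt r t := by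
  have h := (hasFDerivAt_W hr t).comp_hasDerivAt t
    ((hasDerivAt_const t r).prodMk (hasDerivAt_id t))
  have hW : HasDerivAt (fun t => W r t) (Wt r t) t := by
    convert! h using 1
    simp
  exact hW.deriv

lemma deriv_Wr_snd {r : ℝ} (hr : |r| < 1) (t : ℝ) : deriv (fun t => Wr r t) t = Wrt r t := by
  have h := (hasFDerivAt_Wr hr t).comp_hasDerivAt t
    ((hasDerivAt_const t r).prodMk (hasDerivAt_id t))
  have hW : HasDerivAt (fun t => Wr r t) (Wrt r t) t := by
    convert! h using 1
    simp
  exact hW.deriv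

/-- at `(p,q) = (r cos θ, r sin θ) ∈ B₁`, the Hessian determinant of `w` is
`det ℋw = −r⁻²(W_{rθ} − r⁻¹ W_θ)² ≤ 0`, vanishing precisely when `θ = π/4`. -/
theorem stmt7 (r θ : ℝ) (hr : r ∈ Ioo (0 : ℝ) 1) (hθ : θ ∈ Ioo (0 : ℝ) (π / 2)) :
    (wpp (r * Real.cos θ) (r * Real.sin θ) * wqq (r * Real.cos θ) (r * Real.sin θ)
        - wpq (r * Real.cos θ) (r * Real.sin θ) ^ 2
      = -(r ^ 2)⁻¹ * (deriv (fun t => deriv (fun s => W s t) r) θ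
          - r⁻¹ * deriv (fun t => W r t) θ) ^ 2) ∧
    (wpp (r * Real.cos θ) (r * Real.sin θ) * wqq (r * Real.cos θ) (r * Real.sin θ)
        - wpq (r * Real.cos θ) (r * Real.sin θ) ^ 2 ≤ 0) ∧
    (wpp (r * Real.cos θ) (r * Real.sin θ) * wqq (r * Real.cos θ) (r * Real.sin θ)
        - wpq (r * Real.cos θ) (r * Real.sin θ) ^ 2 = 0 ↔ θ = π / 4) := by
  obtain ⟨hr0, hr1⟩ := hr
  obtain ⟨hθ0, hθ1⟩ := hθ
  have hr : |r| < 1 := by rwa [abs_of_pos hr0]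
  have hc : 0 < Real.cos θ := Real.cos_pos_of_mem_Ioo ⟨by linarith, hθ1⟩
  have hcs := Real.cos_sq_add_sin_sq θ
  have hat : arctan (Real.sin θ / Real.cos θ) = θ := by
    rw [← Real.tan_eq_sin_div_cos, Real.arctan_tan (by linarith) hθ1]
  simp only [deriv_W_fst hr, deriv_W_snd hr, deriv_Wr_snd hr]
  obtain ⟨K, hK⟩ : ∃ K, K = Wrt r θ - r⁻¹ * Wt r θ := ⟨_, rfl⟩
  obtain ⟨e1, e2, e3⟩ := hessian_eq hr0 hr1 hc hcs hat hK
  have hdet : wpp (r * Real.cos θ) (r * Real.sin θ) * wqq (r * Real.cos θ) (r * Real.sin θ)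
      - wpq (r * Real.cos θ) (r * Real.sin θ) ^ 2 = -(r ^ 2)⁻¹ * K ^ 2 := by
    rw [e1, e2, e3]
    field_simp
    linear_combination (-K ^ 2 * (Real.cos θ ^ 2 + Real.sin θ ^ 2 + 1)) * hcs
  rw [hdet, ← hK]
  have hinv : 0 < (r ^ 2)⁻¹ := by positivity
  refine ⟨rfl, by nlinarith [sq_nonneg K], ?_⟩
  have hzero : -(r ^ 2)⁻¹ * K ^ 2 = 0 ↔ K = 0 := by
    simp [hr0.ne']
  have h8 : 8 / π * r ^ 3 ≠ 0 := by positivity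
  rw [hzero, hK, Wrt_sub hr0 hr1, mul_eq_zero, or_iff_right h8,
    theta_eq_zero_iff (pow_pos hr0 16) (pow_lt_one₀ hr0.le hr1 (by norm_num))
      ⟨by linarith, by linarith⟩]
  constructor <;> intro h <;> linarith
end
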